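/- Let ε ∈ (0,1) be a quadratic irrational whose conjugate satisfies ε′ < 0, and let Λ = p + qε (p, q ∈ ℚ) with conjugate Λ′ = p + qε′ satisfy Λ·Λ′ ∈ {1, −1}, Λ·ℤ[ε] = ℤ[ε], Λ > 1 and Λ′ ∈ (0,1). Let l, c satisfy max(ε, 1−ε) < l < 1 and c ≤ 0 < c + l, let T be the associated exchange of three intervals on [c, c+l), and set J := [Λ′c, Λ′(c+l)). Then every x ∈ J returns to J under T, and, denoting by n the least positive integer with Tⁿ(x) ∈ J, one has Tⁿ(x) = Λ′·T(x/Λ′); that is, the first return map T_J is homothetic to T with ratio Λ′. -/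

import Mathlib

/-- The set `ℤ[ε] = {a + bε : a, b ∈ ℤ}`. -/
def Zbr (ε : ℝ) : Set ℝ := {x | ∃ a b : ℤ, x = (a : ℝ) + (b : ℝ) * ε}

/-- The exchange of three intervals on `[c, c+l)` with parameters `ε, l, c`. -/
noncomputable def T3 (ε l c : ℝ) (x : ℝ) : ℝ :=
  if x < c + l - 1 + ε then x + 1 - ε
  else if x < c + ε then x + 1 - 2 * ε
  else x - ε


/-- `T` preserves the interval. -/
lemma T3_mem {ε l c x : ℝ} (h0 : 0 < ε) (h1 : ε < 1) (hl₁ : ε < l) (hl₂ : 1 - ε < l)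
    (hx : x ∈ Set.Ico c (c + l)) : T3 ε l c x ∈ Set.Ico c (c + l) := by
  obtain ⟨ha, hb⟩ := hx
  unfold T3
  split_ifs <;> constructor <;> linarith

lemma T3_iter_mem {ε l c x : ℝ} (h0 : 0 < ε) (h1 : ε < 1) (hl₁ : ε < l) (hl₂ : 1 - ε < l)
    (hx : x ∈ Set.Ico c (c + l)) (k : ℕ) : (T3 ε l c)^[k] x ∈ Set.Ico c (c + l) := by
  induction k with
  | zero => simpa using hx
  | succ k ih => rw [Function.iterate_succ_apply']; exact T3_mem h0 h1 hl₁ hl₂ ih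

/-- Every iterate is a displacement with nonnegative coordinates. -/
lemma T3_iter_disp (ε l c x : ℝ) (k : ℕ) :
    ∃ m n : ℕ, k ≤ m + n ∧ (T3 ε l c)^[k] x = x - m * ε + n * (1 - ε) := by
  induction k with
  | zero => exact ⟨0, 0, by simp, by simp⟩
  | succ k ih =>
    obtain ⟨m, n, hk, h⟩ := ih
    rw [Function.iterate_succ_apply', h]
    unfold T3
    split_ifs
    · exact ⟨m, n + 1, by omega, by push_cast; ring⟩
    · exact ⟨m + 1, n + 1, by omega, by push_cast; ring⟩
    · exact ⟨m + 1, n, by omega, by push_cast; ring⟩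

/-- Every nonnegative displacement that stays in the interval is reached. -/
lemma T3_reach {ε l c : ℝ} (h0 : 0 < ε) (h1 : ε < 1) (hl₁ : ε < l) (hl₂ : 1 - ε < l)
    (hl₃ : l < 1) (N : ℕ) : ∀ (m n : ℕ) (x : ℝ), m + n ≤ N → x ∈ Set.Ico c (c + l) →
    x - m * ε + n * (1 - ε) ∈ Set.Ico c (c + l) →
    ∃ k : ℕ, k ≤ m + n ∧ (1 ≤ m + n → 1 ≤ k) ∧
      (T3 ε l c)^[k] x = x - m * ε + n * (1 - ε) := by
  induction N with
  | zero =>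
    intro m n x hN hx hy
    have hm : m = 0 := by omega
    have hn : n = 0 := by omega
    subst hm hn
    exact ⟨0, by simp, by simp, by simp⟩
  | succ N ih =>
    intro m n x hN hx hy
    have hTx := T3_mem h0 h1 hl₁ hl₂ hx
    -- reduce to the image of `x`
    have key : ∀ m' n' : ℕ, m' + n' < m + n →
        T3 ε l c x - m' * ε + n' * (1 - ε) = x - m * ε + n * (1 - ε) →
        ∃ k : ℕ, k ≤ m + n ∧ (1 ≤ m + n → 1 ≤ k) ∧
          (T3 ε l c)^[k] x = x - m * ε + n * (1 - ε) := by
      intro m' n' hlt heq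
      obtain ⟨k, hk, -, hk2⟩ := ih m' n' (T3 ε l c x) (by omega) hTx (by rw [heq]; exact hy)
      exact ⟨k + 1, by omega, by omega, by rw [Function.iterate_succ_apply, hk2, heq]⟩
    obtain ⟨hx1, hx2⟩ := hx
    obtain ⟨hy1, hy2⟩ := hy
    rcases m with _ | m
    · rcases n with _ | n
      · exact ⟨0, by simp, by simp, by simp⟩
      · push_cast at *
        have hn : (0 : ℝ) ≤ n * (1 - ε) := by
          have : (0 : ℝ) ≤ 1 - ε := by linarith
          positivity
        refine key 0 n (by omega) ?_
        have : x < c + l - 1 + ε := by linarith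
        rw [T3, if_pos this]
        push_cast; ring
    · rcases n with _ | n
      · push_cast at *
        have hn : (0 : ℝ) ≤ m * ε := by positivity
        refine key m 0 (by omega) ?_
        have h3 : ¬ x < c + ε := by linarith
        have h2 : ¬ x < c + l - 1 + ε := by linarith
        rw [T3, if_neg h2, if_neg h3]
        push_cast; ring
      · by_cases h2 : x < c + l - 1 + ε
        · refine key (m + 1) n (by omega) ?_
          rw [T3, if_pos h2]; push_cast; ring
        · by_cases h3 : x < c + ε
          · refine key m n (by omega) ?_
            rw [T3, if_neg h2, if_pos h3]; push_cast; ring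
          · refine key m (n + 1) (by omega) ?_
            rw [T3, if_neg h2, if_neg h3]; push_cast; ring

/-- Forward orbits are exactly the points with positive conjugate displacement. -/
lemma T3_orbit_iff {ε l c e' : ℝ} (h0 : 0 < ε) (h1 : ε < 1) (hl₁ : ε < l) (hl₂ : 1 - ε < l)
    (hl₃ : l < 1) (he : e' < 0) {x y : ℝ} (hx : x ∈ Set.Ico c (c + l))
    (hy : y ∈ Set.Ico c (c + l)) :
    (∃ k : ℕ, 1 ≤ k ∧ (T3 ε l c)^[k] x = y) ↔
      ∃ a b : ℤ, y - x = a + b * ε ∧ 0 < (a : ℝ) + b * e' := by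
  constructor
  · rintro ⟨k, hk, hky⟩
    obtain ⟨m, n, hmn, h⟩ := T3_iter_disp ε l c x k
    refine ⟨n, -m - n, ?_, ?_⟩
    · rw [← hky, h]; push_cast; ring
    · push_cast
      have hm : (0 : ℝ) ≤ m := by positivity
      have hn : (0 : ℝ) ≤ n := by positivity
      have hs : (1 : ℝ) ≤ m + n := by exact_mod_cast hk.trans hmn
      nlinarith
  · rintro ⟨a, b, hab, hpos⟩
    obtain ⟨hx1, hx2⟩ := hx
    have hy' := hy
    obtain ⟨hy1, hy2⟩ := hy
    have ha : 0 ≤ a := by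
      by_contra hneg
      have ha1 : a ≤ -1 := by omega
      have hb1 : a + b < 0 ∨ 0 ≤ a + b := by omega
      have ha2 : (a : ℝ) ≤ -1 := by exact_mod_cast ha1
      have hb0 : b < 0 := by
        by_contra hb
        have hb2 : (0 : ℝ) ≤ b := by exact_mod_cast not_lt.mp hb
        nlinarith
      have hb2 : (b : ℝ) ≤ 0 := by exact_mod_cast hb0.le
      nlinarith
    have hb : a + b ≤ 0 := by
      by_contra hneg
      have hb1 : 1 ≤ a + b := by omega
      have hb2 : (1 : ℝ) ≤ a + b := by exact_mod_cast hb1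
      rcases le_or_gt b 0 with hb0 | hb0
      · have : (b : ℝ) ≤ 0 := by exact_mod_cast hb0
        nlinarith
      · have hb3 : (1 : ℝ) ≤ b := by exact_mod_cast hb0
        have ha2 : (0 : ℝ) < a := by nlinarith
        have ha3 : 0 < a := by exact_mod_cast ha2
        have ha4 : (1 : ℝ) ≤ a := by exact_mod_cast ha3
        nlinarith
    obtain ⟨n, rfl⟩ := Int.eq_ofNat_of_zero_le ha
    obtain ⟨m, hm⟩ := Int.eq_ofNat_of_zero_le (show 0 ≤ -(n : ℤ) - b by omega)
    have hb' : b = -(n : ℤ) - m := by omega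
    subst hb'
    push_cast at *
    have e : y = x - m * ε + n * (1 - ε) := by linarith
    obtain ⟨k, -, hk1, hk2⟩ := T3_reach h0 h1 hl₁ hl₂ hl₃ (m + n) m n x le_rfl ⟨hx1, hx2⟩
      (by rw [← e]; exact hy')
    refine ⟨k, hk1 ?_, by rw [hk2, e]⟩
    by_contra h
    have hm : m = 0 := by omega
    have hn : n = 0 := by omega
    subst hm hn
    simp at hpos

lemma T3_aperiodic {ε l c x : ℝ} (h0 : 0 < ε) (h1 : ε < 1) (hε : Irrational ε) {k : ℕ}
    (hk : 1 ≤ k) : (T3 ε l c)^[k] x ≠ x := by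
  intro h
  obtain ⟨m, n, hmn, h'⟩ := T3_iter_disp ε l c x k
  rw [h] at h'
  have h2 : ((m + n : ℕ) : ℝ) * ε = (n : ℝ) := by push_cast; linarith
  have h3 := hε.natCast_mul (m := m + n) (by omega)
  rw [h2] at h3
  exact Nat.not_irrational n h3

/-- Conjugation of a product. -/
lemma conj_mul_eq {ε : ℝ} {A B C : ℤ} (hA : A ≠ 0) (hε : Irrational ε)
    (hquad : (A : ℝ) * ε ^ 2 + (B : ℝ) * ε + (C : ℝ) = 0) {p q : ℚ} {a b a2 b2 : ℤ}
    (h : ((p : ℝ) + q * ε) * (a2 + b2 * ε) = a + b * ε) :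
    ((p : ℝ) + q * (-(B : ℝ) / A - ε)) * (a2 + b2 * (-(B : ℝ) / A - ε)) =
      a + b * (-(B : ℝ) / A - ε) := by
  have hA' : (A : ℝ) ≠ 0 := by exact_mod_cast hA
  have hlin : ∀ r s : ℚ, (r : ℝ) + s * ε = 0 → r = 0 ∧ s = 0 := by
    intro r s hrs
    have hs : s = 0 := by
      by_contra hs
      have := (hε.ratCast_mul hs).ratCast_add r
      rw [hrs] at this
      exact not_irrational_zero this
    subst hs
    simp at hrs
    exact ⟨hrs, rfl⟩
  obtain ⟨hr, hs⟩ := hlin (A * p * a2 - A * a - q * b2 * C)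
    (A * (p * b2 + q * a2) - A * b - q * b2 * B) (by
      push_cast
      linear_combination (A : ℝ) * h - (q : ℝ) * b2 * hquad)
  have hr' : (A * p * a2 - A * a - q * b2 * C : ℝ) = 0 := by exact_mod_cast hr
  have hs' : (A * (p * b2 + q * a2) - A * b - q * b2 * B : ℝ) = 0 := by exact_mod_cast hs
  obtain ⟨e', he'⟩ : ∃ e', e' = -(B : ℝ) / A - ε := ⟨_, rfl⟩
  rw [← he']
  have hsum : (A : ℝ) * (e' + ε) = -B := by rw [he']; field_simp; ring
  have hq' : (A : ℝ) * e' ^ 2 + B * e' + C = 0 := by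
    linear_combination hquad + (e' - ε) * hsum
  apply mul_left_cancel₀ hA'
  linear_combination hr' + hs' * e' + (q : ℝ) * b2 * hq'

theorem firstReturn_homothetic (ε : ℝ) (A B C : ℤ) (hA : A ≠ 0) (hε : Irrational ε)
    (hεm : ε ∈ Set.Ioo (0 : ℝ) 1)
    (hquad : (A : ℝ) * ε ^ 2 + (B : ℝ) * ε + (C : ℝ) = 0)
    (hconj : -(B : ℝ) / (A : ℝ) - ε < 0)
    (p q : ℚ)
    (hunit : ((p : ℝ) + (q : ℝ) * ε) * ((p : ℝ) + (q : ℝ) * (-(B : ℝ) / (A : ℝ) - ε)) = 1 ∨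
             ((p : ℝ) + (q : ℝ) * ε) * ((p : ℝ) + (q : ℝ) * (-(B : ℝ) / (A : ℝ) - ε)) = -1)
    (hZ : (fun z => ((p : ℝ) + (q : ℝ) * ε) * z) '' Zbr ε = Zbr ε)
    (hΛ : 1 < (p : ℝ) + (q : ℝ) * ε)
    (hΛ' : (p : ℝ) + (q : ℝ) * (-(B : ℝ) / (A : ℝ) - ε) ∈ Set.Ioo (0 : ℝ) 1)
    (l c : ℝ) (hl₁ : max ε (1 - ε) < l) (hl₂ : l < 1) (hc₁ : c ≤ 0) (hc₂ : 0 < c + l) :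
    ∀ x ∈ Set.Ico (((p : ℝ) + (q : ℝ) * (-(B : ℝ) / (A : ℝ) - ε)) * c)
        (((p : ℝ) + (q : ℝ) * (-(B : ℝ) / (A : ℝ) - ε)) * (c + l)),
      (∃ n : ℕ, 1 ≤ n ∧ (T3 ε l c)^[n] x ∈
        Set.Ico (((p : ℝ) + (q : ℝ) * (-(B : ℝ) / (A : ℝ) - ε)) * c)
          (((p : ℝ) + (q : ℝ) * (-(B : ℝ) / (A : ℝ) - ε)) * (c + l))) ∧
      ∀ n : ℕ, 1 ≤ n →
        (T3 ε l c)^[n] x ∈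
          Set.Ico (((p : ℝ) + (q : ℝ) * (-(B : ℝ) / (A : ℝ) - ε)) * c)
            (((p : ℝ) + (q : ℝ) * (-(B : ℝ) / (A : ℝ) - ε)) * (c + l)) →
        (∀ m : ℕ, 1 ≤ m → m < n → (T3 ε l c)^[m] x ∉
          Set.Ico (((p : ℝ) + (q : ℝ) * (-(B : ℝ) / (A : ℝ) - ε)) * c)
            (((p : ℝ) + (q : ℝ) * (-(B : ℝ) / (A : ℝ) - ε)) * (c + l))) →
        (T3 ε l c)^[n] x = ((p : ℝ) + (q : ℝ) * (-(B : ℝ) / (A : ℝ) - ε)) *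
          T3 ε l c (x / ((p : ℝ) + (q : ℝ) * (-(B : ℝ) / (A : ℝ) - ε))) := by
  obtain ⟨h0, h1⟩ := hεm
  have hl₁' : ε < l := (le_max_left _ _).trans_lt hl₁
  have hl₂' : 1 - ε < l := (le_max_right _ _).trans_lt hl₁
  have hconjmul := fun a b a2 b2 => @conj_mul_eq ε A B C hA hε hquad p q a b a2 b2
  generalize -(B : ℝ) / (A : ℝ) - ε = e' at *
  generalize (p : ℝ) + (q : ℝ) * ε = L at *
  generalize (p : ℝ) + (q : ℝ) * e' = L' at *
  obtain ⟨hL0, hL1⟩ := hΛ'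
  have hLL : L * L' = 1 := by
    rcases hunit with h | h
    · exact h
    · have : 0 < L * L' := by positivity
      linarith
  -- scaling of points of the small interval
  have hJI : ∀ x ∈ Set.Ico (L' * c) (L' * (c + l)), x ∈ Set.Ico c (c + l) := by
    rintro x ⟨hx1, hx2⟩
    constructor <;> nlinarith
  have hJd : ∀ x ∈ Set.Ico (L' * c) (L' * (c + l)), x / L' ∈ Set.Ico c (c + l) := by
    rintro x ⟨hx1, hx2⟩
    refine ⟨?_, ?_⟩
    · rw [le_div_iff₀ hL0]; linarith
    · rw [div_lt_iff₀ hL0]; linarith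
  have hIJ : ∀ x ∈ Set.Ico c (c + l), L' * x ∈ Set.Ico (L' * c) (L' * (c + l)) := by
    rintro x ⟨hx1, hx2⟩
    exact ⟨mul_le_mul_of_nonneg_left hx1 hL0.le, mul_lt_mul_of_pos_left hx2 hL0⟩
  have hdiv : ∀ x : ℝ, x / L' = L * x := by
    intro x; rw [div_eq_iff hL0.ne']; linear_combination -x * hLL
  -- the orbit relation is invariant under the homothety
  have hscale : ∀ x ∈ Set.Ico (L' * c) (L' * (c + l)), ∀ z ∈ Set.Ico (L' * c) (L' * (c + l)),
      ((∃ k : ℕ, 1 ≤ k ∧ (T3 ε l c)^[k] x = z) ↔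
        ∃ k : ℕ, 1 ≤ k ∧ (T3 ε l c)^[k] (x / L') = z / L') := by
    intro x hx z hz
    rw [T3_orbit_iff h0 h1 hl₁' hl₂' hl₂ hconj (hJI x hx) (hJI z hz),
      T3_orbit_iff h0 h1 hl₁' hl₂' hl₂ hconj (hJd x hx) (hJd z hz)]
    rw [hdiv, hdiv]
    constructor
    · rintro ⟨a, b, hab, hpos⟩
      have hmem : L * (a + b * ε) ∈ Zbr ε := by
        rw [← hZ]; exact ⟨_, ⟨a, b, rfl⟩, rfl⟩
      obtain ⟨a2, b2, h2⟩ := hmem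
      refine ⟨a2, b2, by rw [← h2, ← hab]; ring, ?_⟩
      rw [← hconjmul _ _ _ _ h2]
      positivity
    · rintro ⟨a, b, hab, hpos⟩
      have hmem : (a + b * ε : ℝ) ∈ (fun z => L * z) '' Zbr ε := by
        rw [hZ]; exact ⟨a, b, rfl⟩
      obtain ⟨w, ⟨a2, b2, rfl⟩, h2⟩ := hmem
      refine ⟨a2, b2, ?_, ?_⟩
      · apply mul_left_cancel₀ (show L ≠ 0 by linarith)
        linear_combination hab - h2
      · rw [← hconjmul _ _ _ _ h2] at hpos
        exact (mul_pos_iff_of_pos_left hL0).mp hpos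
  intro x hx
  have hTJ : L' * T3 ε l c (x / L') ∈ Set.Ico (L' * c) (L' * (c + l)) :=
    hIJ _ (T3_mem h0 h1 hl₁' hl₂' (hJd x hx))
  have hTdiv : L' * T3 ε l c (x / L') / L' = T3 ε l c (x / L') := by
    field_simp
  obtain ⟨k, hk1, hk⟩ := (hscale x hx _ hTJ).mpr ⟨1, le_rfl, by rw [hTdiv]; rfl⟩
  refine ⟨⟨k, hk1, by rw [hk]; exact hTJ⟩, ?_⟩
  intro n hn hnJ hmin
  rcases lt_trichotomy k n with hkn | hkn | hkn
  · exact absurd (by rw [hk]; exact hTJ) (hmin k hk1 hkn)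
  · rw [← hkn, hk]
  · exfalso
    obtain ⟨j, hj1, hj⟩ := (hscale x hx _ hnJ).mp ⟨n, hn, rfl⟩
    obtain ⟨i, hi1, hi⟩ := (hscale _ hnJ _ hTJ).mp ⟨k - n, by omega, by
      rw [← Function.iterate_add_apply, Nat.sub_add_cancel hkn.le, hk]⟩
    rw [hTdiv, ← hj, ← Function.iterate_add_apply] at hi
    obtain ⟨r, hr⟩ : ∃ r, i + j = r + 1 := ⟨i + j - 1, by omega⟩
    rw [hr, Function.iterate_succ_apply] at hi
    exact T3_aperiodic h0 h1 hε (by omega) hi
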